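/- In the abstract framework, the primal domain 𝒞 := {g ∈ L⁰₊(μ) : ∫_Ω (g − f) h dμ ≤ 1 for all h ∈ 𝒟} is a convex subset of L⁰₊(μ), it is closed with respect to μ-a.e. convergence (if gⁿ ∈ 𝒞 and gⁿ → g μ-a.e. then g ∈ 𝒞), and for every strictly positive h̄ ∈ 𝒟 one has ∫_Ω g h̄ dμ ≤ 1 + ā/r̲ for all g ∈ 𝒞; consequently 𝒞 is bounded in L⁰(μ) (bounded in μ-measure). Moreover 𝒟 is bounded in L¹(μ). -/

import Mathlib

open MeasureTheory Filter Topology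

variable {Ω : Type}

/-- The abstract primal domain `𝒞(x)`: nonnegative measurable `g` such that
`∫ (g − f) h dμ ≤ x` for all `h ∈ 𝒟` (expressed, for nonnegative quantities,
as `∫ g h dμ ≤ x + ∫ f h dμ` using lower integrals). -/
def memC [MeasurableSpace Ω] (μ : Measure Ω) (D : Set (Ω → ℝ)) (f : Ω → ℝ)
    (x : ℝ) (g : Ω → ℝ) : Prop :=
  Measurable g ∧ (∀ᵐ ω ∂μ, 0 ≤ g ω) ∧
    ∀ h ∈ D, (∫⁻ ω, ENNReal.ofReal (g ω * h ω) ∂μ) ≤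
      ENNReal.ofReal x + ∫⁻ ω, ENNReal.ofReal (f ω * h ω) ∂μ

/-- The abstract dual domain `𝒟(y) = y 𝒟`. -/
def memD (D : Set (Ω → ℝ)) (y : ℝ) (h : Ω → ℝ) : Prop :=
  ∃ h₀ ∈ D, h = fun ω => y * h₀ ω

/-- The convex conjugate `V(y) = sup_{x>0} (U(x) − x y)`. -/
noncomputable def Vconj (U : ℝ → ℝ) (y : ℝ) : ℝ :=
  sSup {z | ∃ x : ℝ, 0 < x ∧ z = U x - x * y}

/-- The primal value function `u(x) = sup_{g ∈ 𝒞(x)} ∫ U(g) dμ`. -/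
noncomputable def uval [MeasurableSpace Ω] (μ : Measure Ω) (D : Set (Ω → ℝ))
    (f : Ω → ℝ) (U : ℝ → ℝ) (x : ℝ) : ℝ :=
  sSup {z | ∃ g, memC μ D f x g ∧ z = ∫ ω, U (g ω) ∂μ}

/-- The dual value function `v(y) = inf_{h ∈ 𝒟(y)} ∫ (V(h) + f h) dμ`. -/
noncomputable def vval [MeasurableSpace Ω] (μ : Measure Ω) (D : Set (Ω → ℝ))
    (f : Ω → ℝ) (U : ℝ → ℝ) (y : ℝ) : ℝ :=
  sInf {z | ∃ h, memD D y h ∧ z = ∫ ω, (Vconj U (h ω) + f ω * h ω) ∂μ}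

/-!
For fixed `h ∈ 𝒟` the budget constraint bounds the functional `g ↦ ∫ g h dμ`, which is additive and
positively homogeneous and, by Fatou's lemma, lower semicontinuous under a.e. convergence; hence `𝒞`
is convex and closed. For boundedness in `L⁰(μ)`, pass to the measure `ν = h̄ μ`: the constraint at
`h̄` says that `𝒞` is bounded in `L¹(ν)`, hence in `ν`-measure by Markov's inequality. As `h̄ > 0`
a.e., the finite measure `μ` is absolutely continuous with respect to `ν`, and absolute continuity
of the integral of `dμ/dν` carries the bound over to `μ`.
-/

section BoundedInMeasure

variable {α E : Type*} [MeasurableSpace α] [SeminormedAddCommGroup E] {μ ν : Measure α}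
  {A : Set (α → E)} {C : ENNReal}

/-- Boundedness of a set of functions in `L⁰(μ)`: the tails `μ {‖g‖ > M}` become small as `M` grows,
uniformly over `g ∈ A`. The tolerance `ε` is taken in `[0, ∞]`, like the values of `μ`. -/
def BoundedInMeasure (μ : Measure α) (A : Set (α → E)) : Prop :=
  ∀ ε : ENNReal, ε ≠ 0 → ∃ M : ℝ, 0 < M ∧ ∀ g ∈ A, μ {a | M < ‖g a‖} < ε

lemma exists_pos_measure_lt_of_absolutelyContinuous [IsFiniteMeasure μ] [SFinite ν]
    [μ.HaveLebesgueDecomposition ν] (hμν : μ ≪ ν) {ε : ENNReal} (hε : ε ≠ 0) :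
    ∃ δ > 0, ∀ s, ν s < δ → μ s < ε := by
  have h_mass : ∫⁻ a, μ.rnDeriv ν a ∂ν ≠ ⊤ := (Measure.lintegral_rnDeriv_lt_top μ ν).ne
  simpa only [Measure.setLIntegral_rnDeriv hμν] using
    exists_pos_setLIntegral_lt_of_measure_lt h_mass hε

lemma boundedInMeasure_of_lintegral_enorm_le (hC : C ≠ ⊤)
    (hA_meas : ∀ g ∈ A, AEStronglyMeasurable g μ) (hA : ∀ g ∈ A, ∫⁻ a, ‖g a‖ₑ ∂μ ≤ C) :
    BoundedInMeasure μ A := by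
  intro ε hε
  obtain ⟨n, hn⟩ := ENNReal.exists_nat_gt (ENNReal.div_ne_top hC hε)
  have hn_ne_zero : (n : ENNReal) ≠ 0 := (zero_le.trans_lt hn).ne'
  refine ⟨n, by exact_mod_cast pos_iff_ne_zero.2 hn_ne_zero, fun g hg => ?_⟩
  calc μ {a | (n : ℝ) < ‖g a‖}
      ≤ μ {a | (n : ENNReal) ≤ ‖g a‖ₑ} := by
        refine measure_mono fun a (ha : (n : ℝ) < ‖g a‖) => ?_
        simpa [← ofReal_norm] using ENNReal.ofReal_le_ofReal ha.le
    _ ≤ (∫⁻ a, ‖g a‖ₑ ∂μ) / n :=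
        meas_ge_le_lintegral_div (hA_meas g hg).enorm hn_ne_zero (ENNReal.natCast_ne_top n)
    _ ≤ C / n := by gcongr; exact hA g hg
    _ < ε := ENNReal.div_lt_of_lt_mul' ((ENNReal.div_lt_iff (.inl hε) (.inr hC)).1 hn)

lemma BoundedInMeasure.of_absolutelyContinuous [IsFiniteMeasure μ] [SFinite ν]
    [μ.HaveLebesgueDecomposition ν] (hA : BoundedInMeasure ν A) (hμν : μ ≪ ν) :
    BoundedInMeasure μ A := by
  intro ε hε
  obtain ⟨δ, hδ, h_small⟩ := exists_pos_measure_lt_of_absolutelyContinuous hμν hε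
  obtain ⟨M, hM, h_tail⟩ := hA δ hδ.ne'
  exact ⟨M, hM, fun g hg => h_small _ (h_tail g hg)⟩

lemma boundedInMeasure_of_lintegral_mul_enorm_le [IsFiniteMeasure μ] {w : α → ENNReal}
    (hw : AEMeasurable w μ) (hw_ne_zero : ∀ᵐ a ∂μ, w a ≠ 0) (hw_ne_top : ∀ᵐ a ∂μ, w a ≠ ⊤)
    (hC : C ≠ ⊤) (hA_meas : ∀ g ∈ A, AEStronglyMeasurable g μ)
    (hA : ∀ g ∈ A, ∫⁻ a, w a * ‖g a‖ₑ ∂μ ≤ C) :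
    BoundedInMeasure μ A := by
  have : SigmaFinite (μ.withDensity w) := .withDensity_of_ne_top hw_ne_top
  have h_weighted : BoundedInMeasure (μ.withDensity w) A :=
    boundedInMeasure_of_lintegral_enorm_le hC
      (fun g hg => (hA_meas g hg).mono_ac (withDensity_absolutelyContinuous μ w))
      (fun g hg =>
        (lintegral_withDensity_eq_lintegral_mul₀ hw (hA_meas g hg).enorm).trans_le (hA g hg))
  exact h_weighted.of_absolutelyContinuous (withDensity_absolutelyContinuous' hw hw_ne_zero)

lemma BoundedInMeasure.exists_measure_lt_ofReal {A : Set (α → ℝ)} (hA : BoundedInMeasure μ A)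
    {ε : ℝ} (hε : 0 < ε) :
    ∃ M : ℝ, 0 < M ∧ ∀ g ∈ A, μ {a | M < g a} < ENNReal.ofReal ε := by
  obtain ⟨M, hM, h_tail⟩ := hA (ENNReal.ofReal ε) (ENNReal.ofReal_pos.2 hε).ne'
  refine ⟨M, hM, fun g hg => (measure_mono fun a ha => ?_).trans_lt (h_tail g hg)⟩
  exact lt_of_lt_of_le ha (le_abs_self (g a))

end BoundedInMeasure

section LowerIntegral

variable {α : Type*} [MeasurableSpace α] {μ : Measure α}

lemma lintegral_le_of_tendsto_ae {ι : Type*} {u : Filter ι} [u.NeBot] [u.IsCountablyGenerated]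
    {F : ι → α → ENNReal} {G : α → ENNReal} {c : ENNReal} (hF : ∀ i, AEMeasurable (F i) μ)
    (hFc : ∀ i, ∫⁻ a, F i a ∂μ ≤ c) (hFG : ∀ᵐ a ∂μ, Tendsto (fun i => F i a) u (𝓝 (G a))) :
    ∫⁻ a, G a ∂μ ≤ c :=
  calc ∫⁻ a, G a ∂μ
      = ∫⁻ a, liminf (fun i => F i a) u ∂μ :=
        lintegral_congr_ae (hFG.mono fun _ ha => ha.liminf_eq.symm)
    _ ≤ liminf (fun i => ∫⁻ a, F i a ∂μ) u := lintegral_liminf_le' hF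
    _ ≤ liminf (fun _ => c) u := liminf_le_liminf (.of_forall hFc)
    _ = c := liminf_const c

lemma lintegral_ofReal_linearCombo_le {G₁ : α → ℝ} (hG₁ : AEMeasurable G₁ μ) (G₂ : α → ℝ)
    {a b : ℝ} (ha : 0 ≤ a) (hb : 0 ≤ b) :
    ∫⁻ x, ENNReal.ofReal (a * G₁ x + b * G₂ x) ∂μ ≤
      ENNReal.ofReal a * ∫⁻ x, ENNReal.ofReal (G₁ x) ∂μ +
        ENNReal.ofReal b * ∫⁻ x, ENNReal.ofReal (G₂ x) ∂μ := by
  rw [← lintegral_const_mul' _ _ ENNReal.ofReal_ne_top,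
    ← lintegral_const_mul' _ _ ENNReal.ofReal_ne_top,
    ← lintegral_add_left' (hG₁.ennreal_ofReal.const_mul _)]
  refine lintegral_mono fun x => ?_
  rw [← ENNReal.ofReal_mul ha, ← ENNReal.ofReal_mul hb]
  exact ENNReal.ofReal_add_le

lemma lintegral_ofReal_mul_le_of_ae_le {f h : α → ℝ} {c : ℝ} (hc : 0 ≤ c)
    (hf : ∀ᵐ x ∂μ, f x ≤ c) (hh : ∀ᵐ x ∂μ, 0 ≤ h x) :
    ∫⁻ x, ENNReal.ofReal (f x * h x) ∂μ ≤ ENNReal.ofReal c * ∫⁻ x, ENNReal.ofReal (h x) ∂μ := by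
  rw [← lintegral_const_mul' _ _ ENNReal.ofReal_ne_top]
  refine lintegral_mono_ae ?_
  filter_upwards [hf, hh] with x hfx hhx
  rw [← ENNReal.ofReal_mul hc]
  exact ENNReal.ofReal_le_ofReal (mul_le_mul_of_nonneg_right hfx hhx)

end LowerIntegral

section PrimalDomain

variable [MeasurableSpace Ω] {μ : Measure Ω} {D : Set (Ω → ℝ)} {f : Ω → ℝ} {x : ℝ}

lemma convex_setOf_memC (hD : ∀ h ∈ D, AEMeasurable h μ) : Convex ℝ {g | memC μ D f x g} := by
  rintro g₁ ⟨hg₁_meas, hg₁_nonneg, hg₁_budget⟩ g₂ ⟨hg₂_meas, hg₂_nonneg, hg₂_budget⟩ a b ha hb hab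
  refine ⟨(hg₁_meas.const_mul a).add (hg₂_meas.const_mul b), ?_, fun h hh => ?_⟩
  · filter_upwards [hg₁_nonneg, hg₂_nonneg] with ω hg₁ω hg₂ω
    exact add_nonneg (mul_nonneg ha hg₁ω) (mul_nonneg hb hg₂ω)
  set budget := ENNReal.ofReal x + ∫⁻ ω, ENNReal.ofReal (f ω * h ω) ∂μ
  calc ∫⁻ ω, ENNReal.ofReal ((a * g₁ ω + b * g₂ ω) * h ω) ∂μ
      = ∫⁻ ω, ENNReal.ofReal (a * (g₁ ω * h ω) + b * (g₂ ω * h ω)) ∂μ := by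
        simp only [add_mul, mul_assoc]
    _ ≤ ENNReal.ofReal a * ∫⁻ ω, ENNReal.ofReal (g₁ ω * h ω) ∂μ +
          ENNReal.ofReal b * ∫⁻ ω, ENNReal.ofReal (g₂ ω * h ω) ∂μ :=
        lintegral_ofReal_linearCombo_le (hg₁_meas.aemeasurable.mul (hD h hh)) _ ha hb
    _ ≤ ENNReal.ofReal a * budget + ENNReal.ofReal b * budget := by
        gcongr
        exacts [hg₁_budget h hh, hg₂_budget h hh]
    _ = budget := by
        rw [← add_mul, ← ENNReal.ofReal_add ha hb, hab, ENNReal.ofReal_one, one_mul]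

lemma memC.of_tendsto_ae {ι : Type*} {u : Filter ι} [u.NeBot] [u.IsCountablyGenerated]
    [Countable ι] (hD : ∀ h ∈ D, AEMeasurable h μ) {gs : ι → Ω → ℝ}
    (hgs : ∀ i, memC μ D f x (gs i)) {g : Ω → ℝ} (hg : Measurable g)
    (hlim : ∀ᵐ ω ∂μ, Tendsto (fun i => gs i ω) u (𝓝 (g ω))) : memC μ D f x g := by
  refine ⟨hg, ?_, fun h hh => ?_⟩
  · filter_upwards [hlim, ae_all_iff.2 fun i => (hgs i).2.1] with ω hω hω_nonneg
    exact ge_of_tendsto' hω hω_nonneg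
  · refine lintegral_le_of_tendsto_ae (u := u)
      (fun i => ((hgs i).1.aemeasurable.mul (hD h hh)).ennreal_ofReal)
      (fun i => (hgs i).2.2 h hh) ?_
    exact hlim.mono fun ω hω => ENNReal.tendsto_ofReal (hω.mul_const (h ω))

lemma memC.lintegral_mul_le {g h : Ω → ℝ} {c K : ℝ} (hg : memC μ D f x g) (hh : h ∈ D)
    (hh_nonneg : ∀ᵐ ω ∂μ, 0 ≤ h ω) (hh_mass : ∫⁻ ω, ENNReal.ofReal (h ω) ∂μ ≤ ENNReal.ofReal K)
    (hf : ∀ᵐ ω ∂μ, f ω ≤ c) (hx : 0 ≤ x) (hc : 0 ≤ c) (hK : 0 ≤ K) :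
    ∫⁻ ω, ENNReal.ofReal (g ω * h ω) ∂μ ≤ ENNReal.ofReal (x + c * K) :=
  calc ∫⁻ ω, ENNReal.ofReal (g ω * h ω) ∂μ
      ≤ ENNReal.ofReal x + ∫⁻ ω, ENNReal.ofReal (f ω * h ω) ∂μ := hg.2.2 h hh
    _ ≤ ENNReal.ofReal x + ENNReal.ofReal c * ENNReal.ofReal K := by
        gcongr
        exact (lintegral_ofReal_mul_le_of_ae_le hc hf hh_nonneg).trans (by gcongr)
    _ = ENNReal.ofReal (x + c * K) := by
        rw [← ENNReal.ofReal_mul hc, ENNReal.ofReal_add hx (mul_nonneg hc hK)]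

lemma boundedInMeasure_setOf_memC [IsFiniteMeasure μ] {h : Ω → ℝ} (hh : h ∈ D)
    (hh_meas : AEMeasurable h μ) (hh_pos : ∀ᵐ ω ∂μ, 0 < h ω)
    (hfh : ∫⁻ ω, ENNReal.ofReal (f ω * h ω) ∂μ ≠ ⊤) :
    BoundedInMeasure μ {g | memC μ D f x g} := by
  refine boundedInMeasure_of_lintegral_mul_enorm_le hh_meas.ennreal_ofReal
    (hh_pos.mono fun ω hω => (ENNReal.ofReal_pos.2 hω).ne')
    (.of_forall fun _ => ENNReal.ofReal_ne_top) (ENNReal.add_ne_top.2 ⟨ENNReal.ofReal_ne_top, hfh⟩)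
    (fun g hg => hg.1.aestronglyMeasurable) fun g hg => le_of_eq_of_le ?_ (hg.2.2 h hh)
  refine lintegral_congr_ae ?_
  filter_upwards [hg.2.1] with ω hω
  rw [Real.enorm_of_nonneg hω, mul_comm, ENNReal.ofReal_mul hω]

end PrimalDomain

theorem primal_dual_domain_properties_general
    [MeasurableSpace Ω] (μ : Measure Ω) [IsFiniteMeasure μ]
    (D : Set (Ω → ℝ)) (rlow : ℝ) (hrlow : 0 < rlow)
    (hD_meas : ∀ h ∈ D, AEMeasurable h μ)
    (hD_nonneg : ∀ h ∈ D, ∀ᵐ ω ∂μ, 0 ≤ h ω)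
    (hD_bound : ∀ h ∈ D, (∫⁻ ω, ENNReal.ofReal (h ω) ∂μ) ≤ ENNReal.ofReal (1 / rlow))
    (hD_pos : ∃ hb ∈ D, ∀ᵐ ω ∂μ, 0 < hb ω)
    (f : Ω → ℝ) (abar : ℝ) (habar : 0 ≤ abar)
    (hf_bound : ∀ᵐ ω ∂μ, 0 ≤ f ω ∧ f ω ≤ abar) (x : ℝ) (hx : 0 ≤ x) :
    Convex ℝ {g | memC μ D f x g} ∧
    (∀ gs : ℕ → Ω → ℝ, (∀ n, memC μ D f x (gs n)) → ∀ g : Ω → ℝ, Measurable g →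
      (∀ᵐ ω ∂μ, Tendsto (fun n => gs n ω) atTop (𝓝 (g ω))) → memC μ D f x g) ∧
    (∀ h ∈ D, ∀ g, memC μ D f x g →
      (∫⁻ ω, ENNReal.ofReal (g ω * h ω) ∂μ) ≤ ENNReal.ofReal (x + abar / rlow)) ∧
    BoundedInMeasure μ {g | memC μ D f x g} ∧
    (∀ h ∈ D, (∫⁻ ω, ENNReal.ofReal (h ω) ∂μ) ≤ ENNReal.ofReal (1 / rlow)) := by
  have hf_le : ∀ᵐ ω ∂μ, f ω ≤ abar := hf_bound.mono fun _ hω => hω.2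
  refine ⟨convex_setOf_memC hD_meas, fun gs hgs g hg hlim => memC.of_tendsto_ae hD_meas hgs hg hlim,
    fun h hh g hg => ?_, ?_, hD_bound⟩
  · simpa only [mul_one_div] using hg.lintegral_mul_le hh (hD_nonneg h hh) (hD_bound h hh) hf_le
      hx habar (one_div_nonneg.2 hrlow.le)
  · obtain ⟨hb, hbD, hb_pos⟩ := hD_pos
    have hb_mass : ∫⁻ ω, ENNReal.ofReal (hb ω) ∂μ ≠ ⊤ :=
      ((hD_bound hb hbD).trans_lt ENNReal.ofReal_lt_top).ne
    exact boundedInMeasure_setOf_memC hbD (hD_meas hb hbD) hb_pos <|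
      ne_top_of_le_ne_top (ENNReal.mul_ne_top ENNReal.ofReal_ne_top hb_mass)
        (lintegral_ofReal_mul_le_of_ae_le habar hf_le (hD_nonneg hb hbD))

/-- **Properties of the primal and dual domains** (Proposition `propertiesCD`):
`𝒞` is convex, closed under μ-a.e. convergence, satisfies
`∫ g h̄ dμ ≤ 1 + ā/r̲` for every strictly positive `h̄ ∈ 𝒟`, is bounded in
`L⁰(μ)`, and `𝒟` is bounded in `L¹(μ)`. -/
theorem primal_dual_domain_properties
    [MeasurableSpace Ω] (μ : Measure Ω) [IsFiniteMeasure μ]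
    (D : Set (Ω → ℝ)) (rlow : ℝ) (hrlow : 0 < rlow)
    (hD_meas : ∀ h ∈ D, Measurable h)
    (hD_nonneg : ∀ h ∈ D, ∀ᵐ ω ∂μ, 0 ≤ h ω)
    (hD_conv : ∀ h₁ ∈ D, ∀ h₂ ∈ D, ∀ a b : ℝ, 0 ≤ a → 0 ≤ b → a + b = 1 →
      (fun ω => a * h₁ ω + b * h₂ ω) ∈ D)
    (hD_closed : ∀ hs : ℕ → Ω → ℝ, (∀ n, hs n ∈ D) → ∀ h : Ω → ℝ, Measurable h →
      (∀ᵐ ω ∂μ, Tendsto (fun n => hs n ω) atTop (𝓝 (h ω))) → h ∈ D)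
    (hD_bound : ∀ h ∈ D, (∫⁻ ω, ENNReal.ofReal (h ω) ∂μ) ≤ ENNReal.ofReal (1 / rlow))
    (hD_pos : ∃ hb ∈ D, ∀ᵐ ω ∂μ, 0 < hb ω)
    (f : Ω → ℝ) (abar : ℝ) (habar : 0 < abar) (hf_meas : Measurable f)
    (hf_bound : ∀ᵐ ω ∂μ, 0 ≤ f ω ∧ f ω ≤ abar)
 :
    (∀ g₁, memC μ D f 1 g₁ → ∀ g₂, memC μ D f 1 g₂ → ∀ a b : ℝ, 0 ≤ a → 0 ≤ b →
      a + b = 1 → memC μ D f 1 (fun ω => a * g₁ ω + b * g₂ ω)) ∧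
    (∀ gs : ℕ → Ω → ℝ, (∀ n, memC μ D f 1 (gs n)) → ∀ g : Ω → ℝ, Measurable g →
      (∀ᵐ ω ∂μ, Tendsto (fun n => gs n ω) atTop (𝓝 (g ω))) → memC μ D f 1 g) ∧
    (∀ hb ∈ D, (∀ᵐ ω ∂μ, 0 < hb ω) → ∀ g, memC μ D f 1 g →
      (∫⁻ ω, ENNReal.ofReal (g ω * hb ω) ∂μ) ≤ ENNReal.ofReal (1 + abar / rlow)) ∧
    (∀ ε : ℝ, 0 < ε → ∃ M : ℝ, 0 < M ∧ ∀ g, memC μ D f 1 g →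
      μ {ω | M < g ω} < ENNReal.ofReal ε) ∧
    (∀ h ∈ D, (∫⁻ ω, ENNReal.ofReal (h ω) ∂μ) ≤ ENNReal.ofReal (1 / rlow)) := by
  obtain ⟨h_convex, h_closed, h_mul_le, h_bounded, hD_L1⟩ :=
    primal_dual_domain_properties_general μ D rlow hrlow
      (fun h hh => (hD_meas h hh).aemeasurable) hD_nonneg hD_bound hD_pos f abar habar.le hf_bound
      1 zero_le_one
  exact ⟨fun _ hg₁ _ hg₂ _ _ ha hb hab => h_convex hg₁ hg₂ ha hb hab, h_closed,
    fun hb hbD _ => h_mul_le hb hbD, fun _ hε => h_bounded.exists_measure_lt_ofReal hε, hD_L1⟩
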